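/- (Closed form for bumpered billiard tables B2(5,n), odd case.) For every odd n ≥ 3 and all signs e ∈ {1,-1}^(2n-3): B_n(e₁,…,e_{2n-3}) = M(e₁,e₂,e₃)·∏_{m=1}^{(n-3)/2} K(e_{4m},e_{4m+1},e_{4m+2},e_{4m+3}) + Σ_{i=0}^{(n-3)/2} H_{n-1-2i}(e₁,…,e_{2n-4-4i})·a(e_{2n-3-4i})·∏_{m=1}^{i} K(e_{2n-2-4i+4(m-1)},e_{2n-1-4i+4(m-1)},e_{2n-4i+4(m-1)},e_{2n+1-4i+4(m-1)}) + Σ_{i=0}^{(n-5)/2} H_{n-2-2i}(e₁,…,e_{2n-6-4i})·L(e_{2n-5-4i},e_{2n-4-4i},e_{2n-3-4i})·∏_{m=1}^{i} K(e_{2n-2-4i+4(m-1)},e_{2n-1-4i+4(m-1)},e_{2n-4i+4(m-1)},e_{2n+1-4i+4(m-1)}). -/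

import Mathlib

/-!
Two unfoldings of the recursion give, for odd `n ≥ 5`, the two-step relation
`B_n = H_{n-1} a(e_{2n-3}) + H_{n-2} L(e_{2n-5}, e_{2n-4}, e_{2n-3}) + B_{n-2} K(e_{2n-6}, …, e_{2n-3})`
(`Bb_odd_step`). The first unfolding deletes the crossing `e_{2n-5}`, which is encoded by overwriting
position `2n-5` with `e_{2n-4}`; this is harmless for `H_{n-2}` and `B_{n-2}` because they read only
the first `2n-6` and `2n-7` signs (`bracket_congr`). The closed form follows by induction from
`B_3 = H_2 a(e₃) + M(e₁, e₂, e₃)`: one step shifts the summation index by one and appends the last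
factor `K` to each product.
-/

open LaurentPolynomial Finset

noncomputable section

/-- The ring `ℤ[A, A⁻¹]` of Laurent polynomials over `ℤ`; the variable `A` is
`LaurentPolynomial.T 1`, and `A^n = T n` for `n : ℤ`. -/
abbrev KR : Type := LaurentPolynomial ℤ

/-- `a ε = A^ε`. -/
def Ca (ε : ℤ) : KR := T ε

/-- `f₂ ε = -A^(-3ε)`. -/
def Cf₂ (ε : ℤ) : KR := -T (-3 * ε)

/-- `δ = -A² - A⁻²`. -/
def Cδ : KR := -T 2 - T (-2)

/-- `X(α,β) = δ·a(α)a(β) + a(α)a(-β) + a(-α)a(β)`. -/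
def CX (α β : ℤ) : KR := Cδ * Ca α * Ca β + Ca α * Ca (-β) + Ca (-α) * Ca β

/-- `g₂(α,β) = X(α,β) + δ·a(-α)a(-β)`, the Kauffman bracket of `T(4,2)`. -/
def Cg₂ (α β : ℤ) : KR := CX α β + Cδ * Ca (-α) * Ca (-β)

/-- `K(α,β,γ,η) = f₂(-α)f₂(-β)a(-γ)a(-η)`. -/
def CK (α β γ η : ℤ) : KR := Cf₂ (-α) * Cf₂ (-β) * Ca (-γ) * Ca (-η)

/-- `N(α,β,γ,η) = f₂(-α)a(-β)a(-γ)a(-η)`. -/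
def CN (α β γ η : ℤ) : KR := Cf₂ (-α) * Ca (-β) * Ca (-γ) * Ca (-η)

/-- `Ñ(α,β,γ,η) = a(-α)f₂(-β)a(-γ)a(-η)`. -/
def CNt (α β γ η : ℤ) : KR := Ca (-α) * Cf₂ (-β) * Ca (-γ) * Ca (-η)

/-- `R(α,β,γ,η) = f₂(-α)a(β)a(-γ)a(-η)`. -/
def CR (α β γ η : ℤ) : KR := Cf₂ (-α) * Ca β * Ca (-γ) * Ca (-η)

/-- `R̃(α,β,γ,η) = a(α)f₂(-β)a(-γ)a(-η)`. -/
def CRt (α β γ η : ℤ) : KR := Ca α * Cf₂ (-β) * Ca (-γ) * Ca (-η)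

/-- `S(α,β,γ,η) = f₂(α)f₂(-β)a(-γ)a(-η)`. -/
def CS (α β γ η : ℤ) : KR := Cf₂ α * Cf₂ (-β) * Ca (-γ) * Ca (-η)

/-- `L(α,β,γ) = f₂(-α)a(β)a(-γ)`. -/
def CL (α β γ : ℤ) : KR := Cf₂ (-α) * Ca β * Ca (-γ)

/-- `M(α,β,γ) = f₂(-α)f₂(β)a(-γ)`. -/
def CM (α β γ : ℤ) : KR := Cf₂ (-α) * Cf₂ β * Ca (-γ)

mutual
  /-- `H n e` is the Kauffman bracket of the Chebyshev billiard table diagram `T(5,n)`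
  with crossing signs `e 1, …, e (2n-2)`. -/
  def Hb : ℕ → (ℕ → ℤ) → KR
    | 0, _ => 1
    | 1, _ => 1
    | 2, e =>
        Ca (e 1) * Ca (e 2) + Cδ * Ca (e 1) * Ca (-e 2) + Cδ * Ca (-e 1) * Ca (e 2)
          + Cδ ^ 2 * Ca (-e 1) * Ca (-e 2)
    | m + 3, e =>
        Hb (m + 2) e * Ca (e (2 * m + 3)) * Ca (e (2 * m + 4))
          + Hb (m + 1) e * CK (e (2 * m + 1)) (e (2 * m + 2)) (e (2 * m + 3)) (e (2 * m + 4))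
          + if (m + 3) % 2 = 1 then
              BTb (m + 2) e * Ca (e (2 * m + 3)) * Ca (-e (2 * m + 4))
                + Bb (m + 2) (Function.update e (2 * m + 1) (e (2 * m + 2)))
                    * Cf₂ (-e (2 * m + 1)) * Ca (-e (2 * m + 3)) * Ca (e (2 * m + 4))
            else
              BTb (m + 2) e * Ca (-e (2 * m + 3)) * Ca (e (2 * m + 4))
                + Bb (m + 2) e * Cf₂ (-e (2 * m + 2)) * Ca (e (2 * m + 3)) * Ca (-e (2 * m + 4))
  termination_by n _ => n

  /-- `B n e` is the Kauffman bracket of the bumpered billiard table `B2(5,n)` with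
  crossing signs `e 1, …, e (2n-3)`. -/
  def Bb : ℕ → (ℕ → ℤ) → KR
    | 0, _ => 1
    | 1, _ => 1
    | 2, e => Cf₂ (e 1)
    | m + 3, e =>
        Hb (m + 2) e * Ca (e (2 * m + 3))
          + if (m + 3) % 2 = 1 then
              Bb (m + 2) (Function.update e (2 * m + 1) (e (2 * m + 2)))
                * Cf₂ (-e (2 * m + 1)) * Ca (-e (2 * m + 3))
            else
              Bb (m + 2) e * Cf₂ (-e (2 * m + 2)) * Ca (-e (2 * m + 3))
  termination_by n _ => n

  /-- `BT n e` is the Kauffman bracket of the bumpered billiard table `B1(5,n)` with its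
  crossingless tangle closure, with crossing signs `e 1, …, e (2n-2)`. -/
  def BTb : ℕ → (ℕ → ℤ) → KR
    | 0, _ => 1
    | 1, _ => 1
    | 2, e => Cg₂ (e 1) (e 2)
    | 3, e => Hb 2 e * CX (e 3) (e 4) + CS (e 1) (e 2) (e 3) (e 4)
    | 4, e =>
        Hb 3 e * CX (e 5) (e 6) + Hb 2 e * CR (e 3) (e 4) (e 5) (e 6)
          + Cg₂ (e 1) (e 2) * CN (e 3) (e 4) (e 5) (e 6)
    | m + 5, e =>
        Hb (m + 4) e * CX (e (2 * m + 7)) (e (2 * m + 8))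
          + if (m + 5) % 2 = 1 then
              Hb (m + 3) e * CRt (e (2 * m + 5)) (e (2 * m + 6)) (e (2 * m + 7)) (e (2 * m + 8))
                + BTb (m + 3) e * CNt (e (2 * m + 5)) (e (2 * m + 6)) (e (2 * m + 7)) (e (2 * m + 8))
            else
              Hb (m + 3) e * CR (e (2 * m + 5)) (e (2 * m + 6)) (e (2 * m + 7)) (e (2 * m + 8))
                + BTb (m + 3) e * CN (e (2 * m + 5)) (e (2 * m + 6)) (e (2 * m + 7)) (e (2 * m + 8))
  termination_by n _ => n
end

/-- The brackets are local: `H_n` and `BT_n` read only the signs at positions up to `2n-2`, and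
`B_n` only those at positions up to `2n-3`. The three facts are proved together because the
recursion is mutual. -/
lemma bracket_congr (n : ℕ) : ∀ e e' : ℕ → ℤ,
    ((∀ i, i + 2 ≤ 2 * n → e i = e' i) → Hb n e = Hb n e' ∧ BTb n e = BTb n e') ∧
    ((∀ i, i + 3 ≤ 2 * n → e i = e' i) → Bb n e = Bb n e') := by
  induction n using Nat.strong_induction_on with
  | _ n ih =>
  intro e e'
  have hH : ∀ k < n, (∀ i, i + 2 ≤ 2 * k → e i = e' i) → Hb k e = Hb k e' :=
    fun k hk h => ((ih k hk e e').1 h).1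
  have hT : ∀ k < n, (∀ i, i + 2 ≤ 2 * k → e i = e' i) → BTb k e = BTb k e' :=
    fun k hk h => ((ih k hk e e').1 h).2
  have hB : ∀ k < n, (∀ i, i + 3 ≤ 2 * k → e i = e' i) → Bb k e = Bb k e' :=
    fun k hk h => (ih k hk e e').2 h
  have hU : ∀ m, m + 2 < n → (∀ i, i ≤ 2 * m + 2 → e i = e' i) →
      Bb (m + 2) (Function.update e (2 * m + 1) (e (2 * m + 2))) =
        Bb (m + 2) (Function.update e' (2 * m + 1) (e' (2 * m + 2))) := by
    intro m hm h
    refine (ih (m + 2) hm _ _).2 fun i hi => ?_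
    rw [h (2 * m + 2) le_rfl]
    by_cases hi' : i = 2 * m + 1
    · subst hi'; simp
    · simp [Function.update_of_ne hi', h i (by omega)]
  refine ⟨fun h => ⟨?_, ?_⟩, fun h => ?_⟩
  · match n with
    | 0 => simp only [Hb]
    | 1 => simp only [Hb]
    | 2 => simp only [Hb, h 1 (by omega), h 2 (by omega)]
    | m + 3 =>
      rw [Hb, Hb, hH (m + 2) (by omega) fun i hi => h i (by omega),
        hH (m + 1) (by omega) fun i hi => h i (by omega),
        hT (m + 2) (by omega) fun i hi => h i (by omega),
        hB (m + 2) (by omega) fun i hi => h i (by omega),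
        hU m (by omega) fun i hi => h i (by omega),
        h (2 * m + 1) (by omega), h (2 * m + 2) (by omega), h (2 * m + 3) (by omega),
        h (2 * m + 4) (by omega)]
  · match n with
    | 0 => simp only [BTb]
    | 1 => simp only [BTb]
    | 2 => simp only [BTb, h 1 (by omega), h 2 (by omega)]
    | 3 =>
      rw [BTb, BTb, hH 2 (by omega) fun i hi => h i (by omega), h 1 (by omega), h 2 (by omega),
        h 3 (by omega), h 4 (by omega)]
    | 4 =>
      rw [BTb, BTb, hH 3 (by omega) fun i hi => h i (by omega),
        hH 2 (by omega) fun i hi => h i (by omega), h 1 (by omega), h 2 (by omega),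
        h 3 (by omega), h 4 (by omega), h 5 (by omega), h 6 (by omega)]
    | m + 5 =>
      rw [BTb, BTb, hH (m + 4) (by omega) fun i hi => h i (by omega),
        hH (m + 3) (by omega) fun i hi => h i (by omega),
        hT (m + 3) (by omega) fun i hi => h i (by omega),
        h (2 * m + 5) (by omega), h (2 * m + 6) (by omega), h (2 * m + 7) (by omega),
        h (2 * m + 8) (by omega)]
  · match n with
    | 0 => simp only [Bb]
    | 1 => simp only [Bb]
    | 2 => simp only [Bb, h 1 (by omega)]
    | m + 3 =>
      rw [Bb, Bb, hH (m + 2) (by omega) fun i hi => h i (by omega),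
        hB (m + 2) (by omega) fun i hi => h i (by omega),
        hU m (by omega) fun i hi => h i (by omega),
        h (2 * m + 1) (by omega), h (2 * m + 2) (by omega), h (2 * m + 3) (by omega)]

lemma Bb_three (e : ℕ → ℤ) :
    Bb 3 e = CM (e 1) (e 2) (e 3) + Hb 2 e * Ca (e 3) := by
  rw [Bb, if_pos (by norm_num), Bb, CM]
  simp only [Nat.mul_zero, Nat.zero_add, Function.update_self]
  ring

/-- The two-step recursion for `B_n` at odd `n = 2k + 5`. -/
lemma Bb_odd_step (k : ℕ) (e : ℕ → ℤ) :
    Bb (2 * k + 5) e = Hb (2 * k + 4) e * Ca (e (4 * k + 7))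
      + Hb (2 * k + 3) e * CL (e (4 * k + 5)) (e (4 * k + 6)) (e (4 * k + 7))
      + Bb (2 * k + 3) e *
          CK (e (4 * k + 4)) (e (4 * k + 5)) (e (4 * k + 6)) (e (4 * k + 7)) := by
  have i4 : 2 * (2 * k + 1) + 2 = 4 * k + 4 := by ring
  have i5 : 2 * (2 * k + 1) + 3 = 4 * k + 5 := by ring
  have j5 : 2 * (2 * k + 2) + 1 = 4 * k + 5 := by ring
  have j6 : 2 * (2 * k + 2) + 2 = 4 * k + 6 := by ring
  have j7 : 2 * (2 * k + 2) + 3 = 4 * k + 7 := by ring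
  have hloc : ∀ i, i + 2 ≤ 2 * (2 * k + 3) →
      Function.update e (4 * k + 5) (e (4 * k + 6)) i = e i :=
    fun i hi => Function.update_of_ne (by omega) _ _
  have hH : Hb (2 * k + 3) (Function.update e (4 * k + 5) (e (4 * k + 6))) = Hb (2 * k + 3) e :=
    ((bracket_congr _ _ _).1 hloc).1
  have hB : Bb (2 * k + 3) (Function.update e (4 * k + 5) (e (4 * k + 6))) = Bb (2 * k + 3) e :=
    (bracket_congr _ _ _).2 fun i hi => hloc i (by omega)
  have hodd : Bb (2 * k + 5) e = Hb (2 * k + 4) e * Ca (e (4 * k + 7))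
      + Bb (2 * k + 4) (Function.update e (4 * k + 5) (e (4 * k + 6)))
        * Cf₂ (-e (4 * k + 5)) * Ca (-e (4 * k + 7)) := by
    rw [show 2 * k + 5 = (2 * k + 2) + 3 from rfl, Bb, if_pos (by omega), j5, j6, j7]
  have heven : ∀ e' : ℕ → ℤ, Bb (2 * k + 4) e' = Hb (2 * k + 3) e' * Ca (e' (4 * k + 5))
      + Bb (2 * k + 3) e' * Cf₂ (-e' (4 * k + 4)) * Ca (-e' (4 * k + 5)) := by
    intro e'
    rw [show 2 * k + 4 = (2 * k + 1) + 3 from rfl, Bb, if_neg (by omega), i4, i5]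
  rw [hodd, heven, hH, hB, Function.update_self, hloc (4 * k + 4) (by omega), CL, CK]
  ring

/-- The closed form with `n = 2k + 3`, where `(n - 3) / 2 = k`. -/
lemma Bb_closed_form (k : ℕ) (e : ℕ → ℤ) :
    Bb (2 * k + 3) e =
      CM (e 1) (e 2) (e 3) *
          ∏ m ∈ Finset.range k,
            CK (e (4 * m + 4)) (e (4 * m + 5)) (e (4 * m + 6)) (e (4 * m + 7))
        + (∑ i ∈ Finset.range (k + 1),
            Hb (2 * k + 3 - 1 - 2 * i) e * Ca (e (2 * (2 * k + 3) - 3 - 4 * i)) *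
              ∏ m ∈ Finset.range i,
                CK (e (2 * (2 * k + 3) - 2 - 4 * i + 4 * m))
                  (e (2 * (2 * k + 3) - 1 - 4 * i + 4 * m))
                  (e (2 * (2 * k + 3) - 4 * i + 4 * m))
                  (e (2 * (2 * k + 3) + 1 - 4 * i + 4 * m)))
        + ∑ i ∈ Finset.range k,
            Hb (2 * k + 3 - 2 - 2 * i) e *
                CL (e (2 * (2 * k + 3) - 5 - 4 * i)) (e (2 * (2 * k + 3) - 4 - 4 * i))
                  (e (2 * (2 * k + 3) - 3 - 4 * i)) *
              ∏ m ∈ Finset.range i,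
                CK (e (2 * (2 * k + 3) - 2 - 4 * i + 4 * m))
                  (e (2 * (2 * k + 3) - 1 - 4 * i + 4 * m))
                  (e (2 * (2 * k + 3) - 4 * i + 4 * m))
                  (e (2 * (2 * k + 3) + 1 - 4 * i + 4 * m)) := by
  induction k with
  | zero => simpa using Bb_three e
  | succ k ih =>
    have hprod : ∀ i ≤ k, ∏ m ∈ Finset.range (i + 1),
          CK (e (2 * (2 * (k + 1) + 3) - 2 - 4 * (i + 1) + 4 * m))
            (e (2 * (2 * (k + 1) + 3) - 1 - 4 * (i + 1) + 4 * m))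
            (e (2 * (2 * (k + 1) + 3) - 4 * (i + 1) + 4 * m))
            (e (2 * (2 * (k + 1) + 3) + 1 - 4 * (i + 1) + 4 * m)) =
        (∏ m ∈ Finset.range i,
          CK (e (2 * (2 * k + 3) - 2 - 4 * i + 4 * m))
            (e (2 * (2 * k + 3) - 1 - 4 * i + 4 * m))
            (e (2 * (2 * k + 3) - 4 * i + 4 * m))
            (e (2 * (2 * k + 3) + 1 - 4 * i + 4 * m))) *
          CK (e (4 * k + 4)) (e (4 * k + 5)) (e (4 * k + 6)) (e (4 * k + 7)) := by
      intro i hi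
      rw [Finset.prod_range_succ]
      congr 1
      · refine Finset.prod_congr rfl fun m _ => ?_
        congr 2 <;> omega
      · congr 2 <;> omega
    rw [show 2 * (k + 1) + 3 = 2 * k + 5 by ring] at hprod ⊢
    -- The right-hand sums are split before the induction hypothesis brings in sums of the same shape.
    rw [Bb_odd_step, Finset.prod_range_succ _ k, Finset.sum_range_succ' _ k,
      Finset.sum_range_succ' _ (k + 1), ih, add_mul, add_mul, Finset.sum_mul, Finset.sum_mul]
    rw [Finset.sum_congr (s₁ := Finset.range (k + 1)) rfl fun i hi => by
      have hi := Finset.mem_range.mp hi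
      rw [mul_assoc, ← hprod i (by omega),
        show 2 * k + 3 - 1 - 2 * i = 2 * k + 5 - 1 - 2 * (i + 1) by omega,
        show 2 * (2 * k + 3) - 3 - 4 * i = 2 * (2 * k + 5) - 3 - 4 * (i + 1) by omega],
      Finset.sum_congr (s₁ := Finset.range k) rfl fun i hi => by
      have hi := Finset.mem_range.mp hi
      rw [mul_assoc, ← hprod i (by omega),
        show 2 * k + 3 - 2 - 2 * i = 2 * k + 5 - 2 - 2 * (i + 1) by omega,
        show 2 * (2 * k + 3) - 3 - 4 * i = 2 * (2 * k + 5) - 3 - 4 * (i + 1) by omega,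
        show 2 * (2 * k + 3) - 4 - 4 * i = 2 * (2 * k + 5) - 4 - 4 * (i + 1) by omega,
        show 2 * (2 * k + 3) - 5 - 4 * i = 2 * (2 * k + 5) - 5 - 4 * (i + 1) by omega]]
    simp only [Finset.range_zero, Finset.prod_empty, Nat.mul_zero, Nat.sub_zero, mul_one,
      show 2 * k + 5 - 1 = 2 * k + 4 by omega, show 2 * k + 5 - 2 = 2 * k + 3 by omega,
      show 2 * (2 * k + 5) - 3 = 4 * k + 7 by omega,
      show 2 * (2 * k + 5) - 4 = 4 * k + 6 by omega,
      show 2 * (2 * k + 5) - 5 = 4 * k + 5 by omega]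
    ring

/-- Closed form for the Kauffman bracket of the bumpered billiard tables `B2(5,n)`,
odd case. -/
theorem bumpered_B2_closed_form_odd (n : ℕ) (hn : 3 ≤ n) (hodd : n % 2 = 1)
    (e : ℕ → ℤ) (he : ∀ i, e i = 1 ∨ e i = -1) :
    Bb n e =
      CM (e 1) (e 2) (e 3) *
          ∏ m ∈ Finset.range ((n - 3) / 2),
            CK (e (4 * m + 4)) (e (4 * m + 5)) (e (4 * m + 6)) (e (4 * m + 7))
        + (∑ i ∈ Finset.range ((n - 3) / 2 + 1),
            Hb (n - 1 - 2 * i) e * Ca (e (2 * n - 3 - 4 * i)) *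
              ∏ m ∈ Finset.range i,
                CK (e (2 * n - 2 - 4 * i + 4 * m)) (e (2 * n - 1 - 4 * i + 4 * m))
                  (e (2 * n - 4 * i + 4 * m)) (e (2 * n + 1 - 4 * i + 4 * m)))
        + ∑ i ∈ Finset.range ((n - 3) / 2),
            Hb (n - 2 - 2 * i) e *
                CL (e (2 * n - 5 - 4 * i)) (e (2 * n - 4 - 4 * i)) (e (2 * n - 3 - 4 * i)) *
              ∏ m ∈ Finset.range i,
                CK (e (2 * n - 2 - 4 * i + 4 * m)) (e (2 * n - 1 - 4 * i + 4 * m))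
                  (e (2 * n - 4 * i + 4 * m)) (e (2 * n + 1 - 4 * i + 4 * m)) := by
  obtain ⟨k, rfl⟩ : ∃ k, n = 2 * k + 3 := ⟨(n - 3) / 2, by omega⟩
  rw [show (2 * k + 3 - 3) / 2 = k by omega]
  exact Bb_closed_form k e

end
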